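/- The Fano matroid F_7 is an excluded minor of \overline{BL}; in particular, there is no graph G with L(G) isomorphic to F_7. -/

import Mathlib

/-!
Over `GF(2)` a circuit is a minimal nonempty set of vectors with sum zero. In a graph the minimal
zero-sum sets of incidence vectors are exactly the cycles (Veblen): a minimal nonempty edge set
with all degrees even is connected and, by rank, has at most as many edges as vertices, so all its
degrees are two.

Any two points of `F₇` lie on a line of three points. If `F₇` were graphic, every line would be a
triangle, so that any two edges would share exactly one end. For a line `{a, b, d}` and an edge `c`
off it this is a parity contradiction, because the ends of `d` are the symmetric difference of those
of `a` and `b`. If `F₇` were `L(G)`, every line would contain two cycles of `G`, hence, eliminating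
its third point, every pair of points would contain a cycle. No cycle lies in all three pairs taken
from a basis, so the basis would contain two cycles and be dependent.

A proper minor of `F₇` is represented by vectors of `GF(2)³` that miss some nonzero vector `p`.
Identify `GF(2)³` with the even-weight vectors of `GF(2)⁴` so that `p` becomes the all-ones vector.
The remaining vectors are zero or have weight two, that is, they are the incidence vectors of loops
and of edges on four vertices.
-/

open Set Matroid

universe u

namespace BLFormal

/-! ### Matroid preliminaries -/

/-- A circuit of a matroid: a minimal dependent set. -/
def Circuit {α : Type u} (M : Matroid α) (C : Set α) : Prop := Minimal M.Dep C

/-- Deletion of a set of elements from a matroid. -/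
def del {α : Type u} (M : Matroid α) (D : Set α) : Matroid α := M ↾ (M.E \ D)

/-- Contraction of a set of elements of a matroid, defined by duality. -/
def con {α : Type u} (M : Matroid α) (C : Set α) : Matroid α := (del M✶ C)✶

/-- `N` is a minor of `M` if it is obtained by a contraction followed by a deletion. -/
def IsMinor {α : Type u} (N M : Matroid α) : Prop := ∃ C D : Set α, N = del (con M C) D

/-- `N` is a proper (strict) minor of `M`. -/
def IsStrictMinor {α : Type u} (N M : Matroid α) : Prop := IsMinor N M ∧ N ≠ M

/-- The rank of a set `X` in the matroid `M`, as an extended natural number: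
the supremum of the cardinalities of the independent subsets of `X`. -/
noncomputable def eRk {α : Type u} (M : Matroid α) (X : Set α) : ℕ∞ :=
  ⨆ I : {I : Set α // M.Indep I ∧ I ⊆ X}, (I : Set α).encard

/-- The rank `r(M)` of a matroid, as an extended natural number. -/
noncomputable def eRank {α : Type u} (M : Matroid α) : ℕ∞ := eRk M M.E

/-- A loop of a matroid. -/
def MLoop {α : Type u} (M : Matroid α) (e : α) : Prop := M.Dep {e}

/-- A coloop of a matroid: a loop of the dual. -/
def MColoop {α : Type u} (M : Matroid α) (e : α) : Prop := MLoop M✶ e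

/-- A `k`-separation of a matroid: a partition `(X, Y)` of the ground set with
`|X|, |Y| ≥ k` and `r(X) + r(Y) - r(M) ≤ k - 1`. -/
def IsKSep {α : Type u} (M : Matroid α) (k : ℕ) (X Y : Set α) : Prop :=
  X ∪ Y = M.E ∧ Disjoint X Y ∧ (k : ℕ∞) ≤ X.encard ∧ (k : ℕ∞) ≤ Y.encard ∧
    eRk M X + eRk M Y ≤ eRank M + ((k - 1 : ℕ) : ℕ∞)

/-- A matroid is connected if it has no 1-separation. -/
def MConnected {α : Type u} (M : Matroid α) : Prop := ¬ ∃ X Y, IsKSep M 1 X Y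

/-- A matroid is 3-connected if it is connected and has no 2-separation. -/
def ThreeConnected {α : Type u} (M : Matroid α) : Prop :=
  MConnected M ∧ ¬ ∃ X Y, IsKSep M 2 X Y

/-- Two elements of a matroid form a series pair if no circuit contains exactly one
of them, and some circuit contains both. -/
def SeriesPair {α : Type u} (M : Matroid α) (e f : α) : Prop :=
  (∀ C, Circuit M C → (e ∈ C ↔ f ∈ C)) ∧ ∃ C, Circuit M C ∧ e ∈ C ∧ f ∈ C

/-- A series class: a maximal set in which every two elements form a series pair. -/
def IsSeriesClass {α : Type u} (M : Matroid α) (S : Set α) : Prop :=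
  Maximal (fun T => T.Nonempty ∧ ∀ e ∈ T, ∀ f ∈ T, SeriesPair M e f) S

/-- `N` is a cosimplification `co(M)` of `M`: it is obtained from `M` by contracting
all coloops and, in each series class, all but one element. -/
def IsCosimplification {α : Type u} (M N : Matroid α) : Prop :=
  ∃ D ⊆ M.E, N = con M D ∧ (∀ e, MColoop M e → e ∈ D) ∧
    ∀ S, IsSeriesClass M S → ∃ x ∈ S, S \ D = {x}

/-- `M` is isomorphic to the uniform matroid `U_{k, n}`: the ground set has `n` elements
and the circuits are precisely the `(k+1)`-element subsets of the ground set. -/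
def IsUnif {α : Type u} (k n : ℕ) (M : Matroid α) : Prop :=
  M.E.encard = n ∧ ∀ C, Circuit M C ↔ C ⊆ M.E ∧ C.encard = k + 1

/-- `M` has a `U_{2,4}`-minor. -/
def HasU24Minor {α : Type u} (M : Matroid α) : Prop := ∃ N, IsMinor N M ∧ IsUnif 2 4 N

/-- `M` is isomorphic to the direct sum `U_{2,4} ⊕ U_{0,1}` of `U_{2,4}` and a loop:
its ground set consists of a 4-element set `X` together with one further element `l`,
and its circuits are `{l}` and the 3-element subsets of `X`. -/
def IsU24PlusLoop {α : Type u} (M : Matroid α) : Prop :=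
  ∃ (X : Set α) (l : α), l ∉ X ∧ M.E = insert l X ∧ X.encard = 4 ∧
    ∀ C, Circuit M C ↔ (C = {l} ∨ (C ⊆ X ∧ C.encard = 3))

/-- `M` is isomorphic to the Fano matroid `F₇`: the rank-3 matroid represented over
`GF(2)` by the seven nonzero vectors of `GF(2)³`. -/
def IsFano {α : Type u} (M : Matroid α) : Prop :=
  ∃ v : α → (Fin 3 → ZMod 2),
    Set.BijOn v M.E {w | w ≠ 0} ∧
    ∀ I ⊆ M.E, (M.Indep I ↔ LinearIndependent (ZMod 2) (fun x : I => v x))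

/-! ### Graphs (with loops and parallel edges allowed) -/

/-- A graph on vertex type `V`, with edge set `E` living in the ambient edge type `α`;
each edge is sent to the unordered pair of its end-vertices. -/
structure Graph (V : Type u) (α : Type u) where
  E : Set α
  inc : α → Sym2 V

namespace Graph

variable {V : Type u} {α : Type u}

/-- The vertices incident with an edge set `C`. -/
def vertsOf (G : Graph V α) (C : Set α) : Set V := {v | ∃ e ∈ C, v ∈ G.inc e}

/-- The vertex set of a graph (we consider graphs without isolated vertices). -/
def verts (G : Graph V α) : Set V := G.vertsOf G.E

/-- Deletion of a set of edges from a graph. -/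
def delete (G : Graph V α) (D : Set α) : Graph V α := ⟨G.E \ D, G.inc⟩

/-- The degree of a vertex `v` in the edge set `C`, with loops counting twice. -/
noncomputable def deg (G : Graph V α) (C : Set α) (v : V) : ℕ :=
  {e ∈ C | v ∈ G.inc e}.ncard + {e ∈ C | G.inc e = Sym2.diag v}.ncard

/-- Two vertices are adjacent via an edge of `C`. -/
def AdjOn (G : Graph V α) (C : Set α) (u v : V) : Prop := ∃ e ∈ C, G.inc e = s(u, v)

/-- The subgraph with edge set `C` is connected. -/
def ConnectedOn (G : Graph V α) (C : Set α) : Prop :=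
  ∀ u ∈ G.vertsOf C, ∀ v ∈ G.vertsOf C, Relation.ReflTransGen (G.AdjOn C) u v

/-- `C` is a cycle of `G` : the edge set of a connected 2-regular subgraph. -/
def IsCycle (G : Graph V α) (C : Set α) : Prop :=
  C ⊆ G.E ∧ C.Finite ∧ C.Nonempty ∧ (∀ v ∈ G.vertsOf C, G.deg C v = 2) ∧ G.ConnectedOn C

/-- A graph is 2-edge-connected if each of its edges lies in a cycle. -/
def TwoEdgeConnected (G : Graph V α) : Prop := ∀ e ∈ G.E, ∃ C, G.IsCycle C ∧ e ∈ C

/-- A graph is connected if it has at least one vertex and any two of its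
vertices are joined by a path. -/
def Connected (G : Graph V α) : Prop := G.verts.Nonempty ∧ G.ConnectedOn G.E

/-- Delete a vertex from a graph (removing all edges incident with it). -/
def delVert (G : Graph V α) (v : V) : Graph V α := ⟨{e ∈ G.E | v ∉ G.inc e}, G.inc⟩

/-- A graph is 2-connected if it is connected and stays connected after the
deletion of any vertex. -/
def TwoConnected (G : Graph V α) : Prop :=
  G.Connected ∧ ∀ v ∈ G.verts, (G.delVert v).Connected

/-- `X` contains at least two (distinct) cycles of `G`. -/
def HasTwoCycles (G : Graph V α) (X : Set α) : Prop :=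
  ∃ C₁ C₂, G.IsCycle C₁ ∧ G.IsCycle C₂ ∧ C₁ ≠ C₂ ∧ C₁ ⊆ X ∧ C₂ ⊆ X

/-- The circuits of the bicircular lift matroid of `G`: edge sets containing at
least two cycles and minimal with this property. -/
def LiftCircuit (G : Graph V α) (X : Set α) : Prop :=
  Minimal (fun Y => Y ⊆ G.E ∧ G.HasTwoCycles Y) X

/-- Two edges of a graph form a series pair if no cycle contains exactly one of
them, and some cycle contains both. -/
def SeriesPair (G : Graph V α) (e f : α) : Prop :=
  (∀ C, G.IsCycle C → (e ∈ C ↔ f ∈ C)) ∧ ∃ C, G.IsCycle C ∧ e ∈ C ∧ f ∈ C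

end Graph

/-- `N` is the bicircular lift matroid `L(G)` of `G` : its ground set is `E(G)`
and its circuits are the lift circuits of `G`. -/
def IsLiftRep {V α : Type u} (G : Graph V α) (N : Matroid α) : Prop :=
  N.E = G.E ∧ ∀ C, Circuit N C ↔ G.LiftCircuit C

/-- `N` is the cycle matroid `M(G)` of `G` : its ground set is `E(G)` and its
circuits are the cycles of `G`. -/
def IsGraphicRep {V α : Type u} (G : Graph V α) (N : Matroid α) : Prop :=
  N.E = G.E ∧ ∀ C, Circuit N C ↔ G.IsCycle C

/-- A matroid is bicircular lift if it is (isomorphic to) `L(G)` for some graph `G`. -/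
def IsBicircularLift {α : Type u} (N : Matroid α) : Prop :=
  ∃ (V : Type u) (G : Graph V α), IsLiftRep G N

/-- A matroid is graphic if it is (isomorphic to) the cycle matroid of some graph. -/
def IsGraphic {α : Type u} (N : Matroid α) : Prop :=
  ∃ (V : Type u) (G : Graph V α), IsGraphicRep G N

/-- The class `BL-bar` of matroids that are graphic or bicircular lift. -/
def InBL {α : Type u} (N : Matroid α) : Prop := IsGraphic N ∨ IsBicircularLift N

/-- `M` is an excluded minor for the class `BL-bar`. -/
def ExcludedMinorBL {α : Type u} (M : Matroid α) : Prop :=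
  ¬ InBL M ∧ ∀ N, IsStrictMinor N M → InBL N

/-! ### Special graphs and subdivisions -/

/-- `G` is (a copy of) the complete graph `K₄`. -/
def IsK4 {V α : Type u} (G : Graph V α) : Prop :=
  ∃ v : Fin 4 → V, Function.Injective v ∧
    ∃ ed : {p : Sym2 (Fin 4) // ¬ p.IsDiag} → α, Function.Injective ed ∧
      G.E = Set.range ed ∧ ∀ p, G.inc (ed p) = Sym2.map v p.1

/-- `G` is (a copy of) the complete graph `K₅`. -/
def IsK5 {V α : Type u} (G : Graph V α) : Prop :=
  ∃ v : Fin 5 → V, Function.Injective v ∧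
    ∃ ed : {p : Sym2 (Fin 5) // ¬ p.IsDiag} → α, Function.Injective ed ∧
      G.E = Set.range ed ∧ ∀ p, G.inc (ed p) = Sym2.map v p.1

/-- `G` is (a copy of) the complete bipartite graph `K₃,₃`. -/
def IsK33 {V α : Type u} (G : Graph V α) : Prop :=
  ∃ a b : Fin 3 → V, Function.Injective a ∧ Function.Injective b ∧
    Set.range a ∩ Set.range b = ∅ ∧
    ∃ ed : Fin 3 × Fin 3 → α, Function.Injective ed ∧
      G.E = Set.range ed ∧ ∀ p, G.inc (ed p) = s(a p.1, b p.2)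

/-- `G` is (a copy of) the graph `K₂ⁿ` with two vertices joined by `n` parallel edges. -/
def IsK2n {V α : Type u} (n : ℕ) (G : Graph V α) : Prop :=
  ∃ u v : V, u ≠ v ∧ ∃ ed : Fin n → α, Function.Injective ed ∧
    G.E = Set.range ed ∧ ∀ i, G.inc (ed i) = s(u, v)

/-- `H` is obtained from `G` by subdividing a single edge. -/
def ElemSub {V α : Type u} (G H : Graph V α) : Prop :=
  ∃ e ∈ G.E, ∃ (f g : α) (u v w : V),
    G.inc e = s(u, v) ∧ w ∉ G.verts ∧ f ≠ g ∧
    f ∉ G.E \ {e} ∧ g ∉ G.E \ {e} ∧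
    H.E = (G.E \ {e}) ∪ {f, g} ∧
    H.inc f = s(u, w) ∧ H.inc g = s(w, v) ∧
    ∀ x ∈ G.E \ {e}, H.inc x = G.inc x

/-- `H` is a subdivision of `G` : it is obtained from `G` by repeatedly
subdividing edges. -/
def IsSubdivision {V α : Type u} (G H : Graph V α) : Prop :=
  Relation.ReflTransGen ElemSub G H

/-! ### 2-sums and simplification -/

/-- `N` is the 2-sum `N₁ ⊕₂ᵉ N₂` of `N₁` and `N₂` along `e`. -/
def Is2Sum {α : Type u} (N N₁ N₂ : Matroid α) (e : α) : Prop :=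
  N₁.E ∩ N₂.E = {e} ∧
  ¬ MLoop N₁ e ∧ ¬ MColoop N₁ e ∧ ¬ MLoop N₂ e ∧ ¬ MColoop N₂ e ∧
  N.E = (N₁.E ∪ N₂.E) \ {e} ∧
  ∀ C, Circuit N C ↔
    ((Circuit N₁ C ∧ e ∉ C) ∨ (Circuit N₂ C ∧ e ∉ C) ∨
      ∃ C₁ C₂, Circuit N₁ C₁ ∧ Circuit N₂ C₂ ∧ e ∈ C₁ ∧ e ∈ C₂ ∧
        C = (C₁ \ {e}) ∪ (C₂ \ {e}))

/-- `H` is a simplification `si(G)` of `G` : it is obtained from `G` by deleting all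
loops and all but one edge of each parallel class. -/
def IsSimplification {V α : Type u} (G H : Graph V α) : Prop :=
  H.inc = G.inc ∧ H.E ⊆ G.E ∧ (∀ e ∈ H.E, ¬ (G.inc e).IsDiag) ∧
    ∀ e ∈ G.E, ¬ (G.inc e).IsDiag → ∃! f, f ∈ H.E ∧ G.inc f = G.inc e

/-- `H` is 2-connected, or is obtained from a 2-connected graph and a single edge `K₂`
by identifying one end-vertex of the edge with a vertex of the 2-connected graph. -/
def TwoConnOrPendant {V α : Type u} (H : Graph V α) : Prop :=
  H.TwoConnected ∨
    ∃ (e : α) (u w : V), e ∈ H.E ∧ H.inc e = s(u, w) ∧ u ≠ w ∧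
      (H.delete {e}).TwoConnected ∧ u ∈ (H.delete {e}).verts ∧ w ∉ (H.delete {e}).verts

open scoped symmDiff

/-! ### Zero sums and binary representations -/

section ZeroSum

variable {α W : Type*} [AddCommGroup W]

/-- A nonempty finite set of indices over which a family of vectors sums to zero. Over `GF(2)`
these are the supports of the nontrivial linear relations of the family. -/
def IsZeroSum (w : α → W) (T : Finset α) : Prop := T.Nonempty ∧ ∑ e ∈ T, w e = 0

variable {w : α → W} {S T : Finset α}

lemma IsZeroSum.exists_minimal_subset (hT : IsZeroSum w T) : ∃ S ⊆ T, Minimal (IsZeroSum w) S :=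
  exists_minimal_le_of_wellFoundedLT _ T hT

variable [Module (ZMod 2) W]

lemma sum_symmDiff_eq_add [DecidableEq α] (w : α → W) (S T : Finset α) :
    ∑ e ∈ S ∆ T, w e = ∑ e ∈ S, w e + ∑ e ∈ T, w e := by
  have hS := Finset.sum_inter_add_sum_sdiff S T w
  have hT := Finset.sum_inter_add_sum_sdiff T S w
  have hdouble : ∑ e ∈ S ∩ T, w e + ∑ e ∈ S ∩ T, w e = 0 := ZModModule.add_self _
  rw [Finset.inter_comm] at hT
  rw [symmDiff_def, Finset.sup_eq_union, Finset.sum_union disjoint_sdiff_sdiff, ← hS, ← hT,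
    add_add_add_comm, hdouble, zero_add]

lemma IsZeroSum.symmDiff [DecidableEq α] (hS : IsZeroSum w S) (hT : IsZeroSum w T) (hne : S ≠ T) :
    IsZeroSum w (S ∆ T) :=
  ⟨Finset.symmDiff_nonempty.2 hne, by rw [sum_symmDiff_eq_add, hS.2, hT.2, add_zero]⟩

lemma IsZeroSum.three_le_card (hT : IsZeroSum w T) (hinj : InjOn w T) (hne : ∀ e ∈ T, w e ≠ 0) :
    3 ≤ T.card := by
  classical
  have hpos := hT.1.card_pos
  have hone : T.card ≠ 1 := fun h ↦ by
    obtain ⟨x, rfl⟩ := Finset.card_eq_one.1 h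
    exact hne x (by simp) (by simpa using hT.2)
  have htwo : T.card ≠ 2 := fun h ↦ by
    obtain ⟨x, y, hxy, rfl⟩ := Finset.card_eq_two.1 h
    have hsum := hT.2
    rw [Finset.sum_pair hxy, ← ZModModule.sub_eq_add, sub_eq_zero] at hsum
    exact hxy (hinj (by simp) (by simp) hsum)
  omega

lemma linearIndepOn_zmod_two_iff {I : Set α} :
    LinearIndepOn (ZMod 2) w I ↔ ∀ T : Finset α, ↑T ⊆ I → ¬ IsZeroSum w T := by
  classical
  rw [linearIndepOn_iff']
  refine ⟨fun h T hTI ⟨⟨e, he⟩, hsum⟩ ↦ ?_, fun h T g hTI hsum i hi ↦ by_contra fun hgi ↦ ?_⟩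
  · exact one_ne_zero (h T (fun _ ↦ 1) hTI (by simpa using hsum) e he)
  · refine h {e ∈ T | g e ≠ 0} (fun e he ↦ hTI (Finset.mem_of_mem_filter e he))
      ⟨⟨i, by simp [*]⟩, ?_⟩
    rw [← hsum, Finset.sum_filter]
    refine Finset.sum_congr rfl fun e _ ↦ ?_
    obtain h0 | h1 : g e = 0 ∨ g e = 1 := by generalize g e = z; decide +revert
    · simp [h0]
    · simp [h1]

end ZeroSum

section Represents

variable {α K W W' : Type*} [Field K] [AddCommGroup W] [Module K W] [AddCommGroup W'] [Module K W']

lemma linearIndepOn_union_iff_of_ker_eq_span {w : α → W} {I J : Set α} {f : W →ₗ[K] W'}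
    (hIJ : Disjoint I J) (hf : LinearMap.ker f = Submodule.span K (w '' I)) :
    LinearIndepOn K w (I ∪ J) ↔ LinearIndepOn K w I ∧ LinearIndepOn K (f ∘ w) J := by
  let g : (W ⧸ Submodule.span K (w '' I)) →ₗ[K] W' := Submodule.liftQ _ f hf.ge
  have hg : Function.Injective g := LinearMap.ker_eq_bot.1 (Submodule.ker_liftQ_eq_bot _ _ _ hf.le)
  rw [linearIndepOn_union_iff_quotient hIJ, ← g.linearIndepOn_iff_of_injOn hg.injOn]
  rfl

/-- The family `w` represents the matroid `M` over the field `K`: a subset of the ground set is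
independent in `M` if and only if its family of vectors is linearly independent. -/
def Represents (K : Type*) [Field K] {α W : Type*} [AddCommGroup W] [Module K W] (w : α → W)
    (M : Matroid α) : Prop :=
  ∀ I ⊆ M.E, (M.Indep I ↔ LinearIndepOn K w I)

variable {w : α → W} {M N : Matroid α} {C D : Set α} {f : W →ₗ[K] W'}

lemma Represents.comp_injective (hM : Represents K w M) (hf : Function.Injective f) :
    Represents K (f ∘ w) M := fun I hI ↦
  (hM I hI).trans (f.linearIndepOn_iff_of_injOn hf.injOn).symm

lemma Represents.congr {w' : α → W} (hM : Represents K w M) (h : EqOn w w' M.E) :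
    Represents K w' M := fun I hI ↦
  (hM I hI).trans (linearIndepOn_congr (h.mono hI))

lemma Represents.delete (hM : Represents K w M) : Represents K w (M ＼ D) := fun I hI ↦ by
  rw [delete_indep_iff, and_iff_left (subset_sdiff.1 hI).2, hM I (subset_sdiff.1 hI).1]

lemma Represents.span_image_eq_of_isBasis (hM : Represents K w M) {I X : Set α}
    (hI : M.IsBasis I X) : Submodule.span K (w '' I) = Submodule.span K (w '' X) := by
  refine le_antisymm (Submodule.span_mono (image_mono hI.subset)) (Submodule.span_le.2 ?_)
  rintro _ ⟨e, he, rfl⟩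
  by_contra hespan
  have hind : M.Indep (insert e I) :=
    (hM _ (insert_subset (hI.subset_ground he) hI.indep.subset_ground)).2
      (((hM I hI.indep.subset_ground).1 hI.indep).insert hespan)
  exact hespan (Submodule.subset_span (mem_image_of_mem w (hI.mem_of_insert_indep he hind)))

lemma Represents.encard_eq_finrank_of_isBase [FiniteDimensional K W] (hM : Represents K w M)
    (hspan : Submodule.span K (w '' M.E) = ⊤) {B : Set α} (hB : M.IsBase B) :
    B.encard = Module.finrank K W := by
  have hind : LinearIndepOn K w B := (hM B hB.subset_ground).1 hB.indep
  have htop : Submodule.span K (range fun e : B ↦ w e) = ⊤ := by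
    rw [← image_eq_range, hM.span_image_eq_of_isBasis hB.isBasis_ground, hspan]
  have hfin : Finite B := hind.finite
  rw [Module.finrank_eq_nat_card_basis (Module.Basis.mk hind htop.ge), Nat.card_coe_set_eq,
    B.toFinite.cast_ncard_eq]

lemma Represents.contract (hM : Represents K w M)
    (hf : LinearMap.ker f = Submodule.span K (w '' (C ∩ M.E))) :
    Represents K (f ∘ w) (M ／ C) := by
  intro J hJ
  obtain ⟨hJE, hJC⟩ := subset_sdiff.1 hJ
  obtain ⟨I, hI⟩ := M.exists_isBasis' C
  have hIE := hI.indep.subset_ground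
  have hspan : LinearMap.ker f = Submodule.span K (w '' I) :=
    hf.trans (hM.span_image_eq_of_isBasis hI.isBasis_inter_ground).symm
  rw [hI.contract_indep_iff, and_iff_left hJC.symm, union_comm, hM _ (union_subset hIE hJE),
    linearIndepOn_union_iff_of_ker_eq_span (hJC.symm.mono_left hI.subset) hspan,
    and_iff_right ((hM I hIE).1 hI.indep)]

lemma Represents.del_con (hM : Represents K w M)
    (hf : LinearMap.ker f = Submodule.span K (w '' (C ∩ M.E))) :
    Represents K (f ∘ w) (del (con M C) D) :=
  (hM.contract hf).delete

lemma IsStrictMinor.exists_represents (hNM : IsStrictMinor N M)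
    (hM : Represents K w M) (hinj : InjOn w M.E) (hne : ∀ e ∈ M.E, w e ≠ 0) :
    ∃ w' : α → W, Represents K w' N ∧ ∃ p ≠ 0, p ∉ w' '' N.E := by
  obtain ⟨⟨C, D, rfl⟩, hND⟩ := hNM
  by_cases hC : Disjoint C M.E
  · have hD : ¬ Disjoint D M.E := fun hD ↦ hND <|
      (delete_eq_self_iff.2 (hD.mono_right sdiff_subset)).trans (contract_eq_self_iff.2 hC)
    obtain ⟨d, hdD, hdE⟩ := not_disjoint_iff.1 hD
    have hker : LinearMap.ker (LinearMap.id : W →ₗ[K] W) = Submodule.span K (w '' (C ∩ M.E)) := by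
      rw [hC.inter_eq, image_empty, Submodule.span_empty, LinearMap.ker_id]
    refine ⟨_, hM.del_con hker, w d, hne d hdE, ?_⟩
    rintro ⟨e, he, hed⟩
    exact he.2 (hinj he.1.1 hdE hed ▸ hdD)
  · obtain ⟨c, hcC, hcE⟩ := not_disjoint_iff.1 hC
    obtain ⟨U, hU⟩ := (Submodule.span K (w '' (C ∩ M.E))).exists_isCompl
    refine ⟨_, hM.del_con (Submodule.ker_projection hU.symm), w c, hne c hcE, ?_⟩
    rintro ⟨e, -, hec⟩
    have hcU : w c ∈ U := hec ▸ Submodule.projection_apply_mem hU.symm (w e)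
    have hcC : w c ∈ Submodule.span K (w '' (C ∩ M.E)) :=
      Submodule.subset_span (mem_image_of_mem w ⟨hcC, hcE⟩)
    exact hne c hcE (Submodule.disjoint_def.1 hU.disjoint _ hcC hcU)

end Represents

section Binary

variable {α W : Type*} [AddCommGroup W] [Module (ZMod 2) W] {w : α → W} {N : Matroid α}

lemma Represents.dep_iff_exists_isZeroSum (hN : Represents (ZMod 2) w N) {X : Set α}
    (hX : X ⊆ N.E) : N.Dep X ↔ ∃ T : Finset α, ↑T ⊆ X ∧ IsZeroSum w T := by
  rw [← not_indep_iff hX, hN X hX, linearIndepOn_zmod_two_iff]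
  push Not
  rfl

lemma Represents.circuit_iff_minimal_isZeroSum (hN : Represents (ZMod 2) w N) {C : Set α} :
    Circuit N C ↔ C ⊆ N.E ∧ ∃ T : Finset α, ↑T = C ∧ Minimal (IsZeroSum w) T := by
  constructor
  · intro hC
    have hCE := hC.prop.subset_ground
    obtain ⟨S, hSC, hS⟩ := (hN.dep_iff_exists_isZeroSum hCE).1 hC.prop
    obtain ⟨T, hTS, hT⟩ := hS.exists_minimal_subset
    have hTC : (T : Set α) ⊆ C := (Finset.coe_subset.2 hTS).trans hSC
    have hTdep : N.Dep T :=
      (hN.dep_iff_exists_isZeroSum (hTC.trans hCE)).2 ⟨T, Subset.rfl, hT.prop⟩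
    exact ⟨hCE, T, hC.eq_of_subset hTdep hTC, hT⟩
  · rintro ⟨hTE, T, rfl, hT⟩
    refine ⟨(hN.dep_iff_exists_isZeroSum hTE).2 ⟨T, Subset.rfl, hT.prop⟩, fun X hX hXT ↦ ?_⟩
    obtain ⟨S, hSX, hS⟩ := (hN.dep_iff_exists_isZeroSum hX.subset_ground).1 hX
    have hST : S = T := hT.eq_of_le hS (Finset.coe_subset.1 (hSX.trans hXT))
    exact hST ▸ hSX

end Binary

lemma card_le_card_of_linearIndepOn_of_mem_span {ι κ K W : Type*} [Field K] [AddCommGroup W]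
    [Module K W] {w : ι → W} {u : κ → W} {S : Finset ι} {T : Finset κ}
    (hS : LinearIndepOn K w S) (hT : ∀ i ∈ S, w i ∈ Submodule.span K (u '' T)) :
    S.card ≤ T.card := by
  classical
  have hle : Submodule.span K (w '' S) ≤ Submodule.span K (T.image u) := by
    rw [Finset.coe_image, Submodule.span_le]
    rintro _ ⟨i, hi, rfl⟩
    exact hT i hi
  calc S.card = Module.finrank K (Submodule.span K (w '' S)) := by
        rw [image_eq_range, finrank_span_eq_card hS]
        simp
    _ ≤ Module.finrank K (Submodule.span K (T.image u : Set W)) := Submodule.finrank_mono hle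
    _ ≤ (T.image u).card := finrank_span_finset_le_card _
    _ ≤ T.card := Finset.card_image_le

/-! ### Incidence vectors and cycles of a graph -/

section IncVec

variable {V : Type*}

open Classical in
/-- The incidence vector of an edge with ends `z` over `GF(2)`, counting ends with multiplicity:
it is the indicator function of the ends of a non-loop, and `0` for a loop. The cycle matroid of a
graph is represented by the incidence vectors of its edges. -/
noncomputable def incVec (z : Sym2 V) (v : V) : ZMod 2 := (z.toMultiset.count v : ℕ)

lemma count_toMultiset_mk [DecidableEq V] (a b v : V) :
    (s(a, b) : Sym2 V).toMultiset.count v = (if v = a then 1 else 0) + if v = b then 1 else 0 := by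
  rw [show (s(a, b) : Sym2 V).toMultiset = a ::ₘ {b} from rfl, Multiset.count_cons,
    Multiset.count_singleton, add_comm]

lemma incVec_mk [DecidableEq V] (a b : V) : incVec s(a, b) = Pi.single a 1 + Pi.single b 1 := by
  ext v
  simp only [incVec, count_toMultiset_mk, Nat.cast_add, Nat.cast_ite, Nat.cast_one, Nat.cast_zero,
    Pi.add_apply, Pi.single_apply]

lemma incVec_of_isDiag {z : Sym2 V} (hz : z.IsDiag) : incVec z = 0 := by
  classical
  induction z with | _ a b =>
  rw [Sym2.mk_isDiag_iff.1 hz, incVec_mk, ZModModule.add_self]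

lemma incVec_of_not_isDiag [DecidableEq V] {z : Sym2 V} (hz : ¬ z.IsDiag) (v : V) :
    incVec z v = if v ∈ z then 1 else 0 := by
  induction z with | _ a b =>
  rw [Sym2.mk_isDiag_iff] at hz
  simp only [incVec_mk, Pi.add_apply, Pi.single_apply, Sym2.mem_iff]
  grind

end IncVec

lemma card_symmDiff_add {V : Type*} [DecidableEq V] (S T : Finset V) :
    (S ∆ T).card + 2 * (S ∩ T).card = S.card + T.card := by
  have hS := Finset.card_sdiff_add_card_inter S T
  have hT := Finset.card_sdiff_add_card_inter T S
  rw [Finset.inter_comm] at hT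
  rw [symmDiff_def, Finset.sup_eq_union, Finset.card_union_of_disjoint disjoint_sdiff_sdiff]
  omega

namespace Graph

variable {V α : Type u} {G : Graph V α}

section Connected

variable {C S : Set α}

lemma reflTransGen_adjOn_of_mem_inc {e : α} {u v : V} (he : e ∈ C) (hu : u ∈ G.inc e)
    (hv : v ∈ G.inc e) : Relation.ReflTransGen (G.AdjOn C) u v := by
  obtain rfl | huv := eq_or_ne u v
  · rfl
  · exact .single ⟨e, he, (Sym2.mem_and_mem_iff huv).1 ⟨hu, hv⟩⟩

/-- The edge set `S` is a union of connected components of `C`. Connectedness of `C` means that it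
has no such nonempty proper subset. -/
def IsClosedIn (G : Graph V α) (S C : Set α) : Prop :=
  S ⊆ C ∧ ∀ e ∈ C, ∀ v ∈ G.inc e, v ∈ G.vertsOf S → e ∈ S

lemma ConnectedOn.eq_of_isClosedIn (hC : G.ConnectedOn C) (hS : G.IsClosedIn S C)
    (hne : S.Nonempty) : S = C := by
  refine hS.1.antisymm fun e he ↦ ?_
  obtain ⟨f, hf⟩ := hne
  have hreach {u v : V} (h : Relation.ReflTransGen (G.AdjOn C) u v) (hu : u ∈ G.vertsOf S) :
      v ∈ G.vertsOf S := by
    induction h with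
    | refl => exact hu
    | tail _ hxy ih =>
      obtain ⟨g, hg, hinc⟩ := hxy
      exact ⟨g, hS.2 g hg _ (hinc ▸ Sym2.mem_mk_left _ _) ih, hinc ▸ Sym2.mem_mk_right _ _⟩
  have huv := hC _ ⟨f, hS.1 hf, Sym2.out_fst_mem _⟩ _ ⟨e, he, Sym2.out_fst_mem _⟩
  exact hS.2 e he _ (Sym2.out_fst_mem _) (hreach huv ⟨f, hf, Sym2.out_fst_mem _⟩)

lemma connectedOn_of_forall_isClosedIn (h : ∀ S, G.IsClosedIn S C → S.Nonempty → S = C) :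
    G.ConnectedOn C := by
  rintro u ⟨f, hf, huf⟩ v ⟨e, he, hve⟩
  let S : Set α := {g ∈ C | ∃ x ∈ G.inc g, Relation.ReflTransGen (G.AdjOn C) u x}
  have hS : G.IsClosedIn S C := by
    refine ⟨sep_subset _ _, ?_⟩
    rintro g hg x hxg ⟨g', ⟨hg', y, hyg', huy⟩, hxg'⟩
    exact ⟨hg, x, hxg, huy.trans (reflTransGen_adjOn_of_mem_inc hg' hyg' hxg')⟩
  rw [← h S hS ⟨f, hf, u, huf, .refl⟩] at he
  obtain ⟨heC, x, hxe, hux⟩ := he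
  exact hux.trans (reflTransGen_adjOn_of_mem_inc heC hxe hve)

end Connected

section Degree

variable {S T : Finset α} {v : V}

open Classical in
lemma deg_coe (G : Graph V α) (T : Finset α) (v : V) :
    G.deg T v = ∑ e ∈ T, (G.inc e).toMultiset.count v := by
  have hcount (z : Sym2 V) : z.toMultiset.count v =
      (if v ∈ z then 1 else 0) + if z = Sym2.diag v then 1 else 0 := by
    induction z with | _ a b =>
    simp only [count_toMultiset_mk, Sym2.mem_iff, Sym2.diag, Sym2.eq_iff]
    grind
  simp only [hcount, Finset.sum_add_distrib, ← Finset.card_filter]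
  rw [deg, ← ncard_coe_finset, ← ncard_coe_finset, Finset.coe_filter, Finset.coe_filter]
  rfl

lemma deg_eq_zero_iff : G.deg T v = 0 ↔ v ∉ G.vertsOf T := by
  classical
  rw [deg_coe, Finset.sum_eq_zero_iff]
  simp only [Multiset.count_eq_zero, Sym2.mem_toMultiset]
  simp [vertsOf]

lemma mem_of_deg_eq_deg {e : α} (hST : S ⊆ T) (h : G.deg S v = G.deg T v) (he : e ∈ T)
    (hv : v ∈ G.inc e) : e ∈ S := by
  classical
  by_contra heS
  rw [deg_coe, deg_coe] at h
  exact h.not_lt <| Finset.sum_lt_sum_of_subset hST he heS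
    (Multiset.count_pos.2 (Sym2.mem_toMultiset.2 hv)) fun _ _ _ ↦ zero_le

lemma deg_le_deg (hST : S ⊆ T) : G.deg S v ≤ G.deg T v := by
  classical
  rw [deg_coe, deg_coe]
  exact Finset.sum_le_sum_of_subset hST

lemma deg_eq_deg_of_isClosedIn (hST : G.IsClosedIn S T) (hv : v ∈ G.vertsOf S) :
    G.deg S v = G.deg T v := by
  classical
  rw [deg_coe, deg_coe]
  refine Finset.sum_subset (Finset.coe_subset.1 hST.1) fun e heT heS ↦ ?_
  exact Multiset.count_eq_zero.2 fun hve ↦ heS (hST.2 e heT v (Sym2.mem_toMultiset.1 hve) hv)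

lemma isZeroSum_incVec_iff :
    IsZeroSum (incVec ∘ G.inc) T ↔ T.Nonempty ∧ ∀ v, Even (G.deg T v) := by
  refine and_congr_right fun _ ↦ funext_iff.trans (forall_congr' fun v ↦ ?_)
  simp only [deg_coe, Finset.sum_apply, Function.comp_apply, incVec, ← Nat.cast_sum,
    Pi.zero_apply, ZMod.natCast_eq_zero_iff_even]

lemma sum_deg {W : Finset V} (hW : G.vertsOf T ⊆ W) : ∑ v ∈ W, G.deg T v = 2 * T.card := by
  classical
  simp only [deg_coe]
  rw [Finset.sum_comm, mul_comm]
  refine Finset.sum_const_nat fun e he ↦ ?_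
  rw [Multiset.sum_count_eq_card, Sym2.card_toMultiset]
  exact fun v hv ↦ hW ⟨e, he, Sym2.mem_toMultiset.1 hv⟩

end Degree

section Veblen

variable {S T : Finset α}

lemma IsCycle.eq_of_isZeroSum (hT : G.IsCycle T) (hST : S ⊆ T)
    (hS : IsZeroSum (incVec ∘ G.inc) S) : S = T := by
  obtain ⟨hne, heven⟩ := isZeroSum_incVec_iff.1 hS
  obtain ⟨-, -, -, hdeg, hconn⟩ := hT
  refine Finset.coe_injective (hconn.eq_of_isClosedIn ⟨Finset.coe_subset.2 hST, ?_⟩ hne)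
  intro e he v hve hv
  have hpos : G.deg S v ≠ 0 := fun h0 ↦ deg_eq_zero_iff.1 h0 hv
  have hle : G.deg S v ≤ 2 := (deg_le_deg hST).trans_eq (hdeg v ⟨e, he, hve⟩)
  have htwo : G.deg S v = 2 := by grind
  exact mem_of_deg_eq_deg hST (htwo.trans (hdeg v ⟨e, he, hve⟩).symm) he hve

lemma IsCycle.minimal_isZeroSum (hT : G.IsCycle T) : Minimal (IsZeroSum (incVec ∘ G.inc)) T := by
  obtain ⟨-, -, hne, hdeg, -⟩ := id hT
  refine ⟨isZeroSum_incVec_iff.2 ⟨hne, fun v ↦ ?_⟩,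
    fun S hS hST ↦ (hT.eq_of_isZeroSum hST hS).ge⟩
  by_cases hv : v ∈ G.vertsOf T
  · exact hdeg v hv ▸ even_two
  · exact deg_eq_zero_iff.2 hv ▸ Even.zero

lemma connectedOn_of_minimal_isZeroSum (hT : Minimal (IsZeroSum (incVec ∘ G.inc)) T) :
    G.ConnectedOn T := by
  refine connectedOn_of_forall_isClosedIn fun S hS hne ↦ ?_
  lift S to Finset α using T.finite_toSet.subset hS.1
  have heven := (isZeroSum_incVec_iff.1 hT.prop).2
  have hSzero : IsZeroSum (incVec ∘ G.inc) S := isZeroSum_incVec_iff.2 ⟨hne, fun v ↦ by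
    by_cases hv : v ∈ G.vertsOf S
    · exact deg_eq_deg_of_isClosedIn hS hv ▸ heven v
    · exact deg_eq_zero_iff.2 hv ▸ Even.zero⟩
  rw [hT.eq_of_le hSzero (Finset.coe_subset.1 hS.1)]

lemma incVec_mem_span [DecidableEq V] {W : Finset V} {z : Sym2 V} (hz : ∀ v ∈ z, v ∈ W) (c : V) :
    incVec z ∈ Submodule.span (ZMod 2)
      ((fun v ↦ Pi.single v 1 + Pi.single c 1 : V → V → ZMod 2) '' W.erase c) := by
  have hend {v : V} (hv : v ∈ W) : (Pi.single v 1 + Pi.single c 1 : V → ZMod 2) ∈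
      Submodule.span (ZMod 2)
        ((fun v ↦ Pi.single v 1 + Pi.single c 1 : V → V → ZMod 2) '' W.erase c) := by
    obtain rfl | hvc := eq_or_ne v c
    · rw [ZModModule.add_self]
      exact zero_mem _
    · exact Submodule.subset_span (mem_image_of_mem _ (Finset.mem_erase.2 ⟨hvc, hv⟩))
  induction z with | _ a b =>
  have hadd := add_mem (hend (hz a (Sym2.mem_mk_left a b))) (hend (hz b (Sym2.mem_mk_right a b)))
  rwa [add_add_add_comm, ZModModule.add_self (Pi.single c 1), add_zero, ← incVec_mk] at hadd

lemma card_le_of_minimal_isZeroSum (hT : Minimal (IsZeroSum (incVec ∘ G.inc)) T) {W : Finset V}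
    (hW : G.vertsOf T ⊆ W) : T.card ≤ W.card := by
  classical
  obtain ⟨e, he⟩ := hT.prop.1
  obtain ⟨c, hc⟩ : ∃ c, c ∈ G.inc e := ⟨_, Sym2.out_fst_mem _⟩
  have hcW : c ∈ W := hW ⟨e, he, hc⟩
  -- The edges other than `e` are independent vectors in a span of `|W| - 1` vectors.
  have hindep : LinearIndepOn (ZMod 2) (incVec ∘ G.inc) (T.erase e : Set α) :=
    linearIndepOn_zmod_two_iff.2 fun S hS hSzero ↦ by
      have hSe := Finset.coe_subset.1 hS
      exact Finset.notMem_erase e T (hSe (hT.2 hSzero (hSe.trans (Finset.erase_subset e T)) he))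
  have hcard : (T.erase e).card ≤ (W.erase c).card :=
    card_le_card_of_linearIndepOn_of_mem_span hindep fun f hf ↦
      incVec_mem_span (fun v hv ↦ hW ⟨f, Finset.mem_of_mem_erase hf, hv⟩) c
  rw [Finset.card_erase_of_mem he, Finset.card_erase_of_mem hcW] at hcard
  have := Finset.card_pos.2 ⟨c, hcW⟩
  omega

lemma deg_eq_two_of_minimal_isZeroSum (hT : Minimal (IsZeroSum (incVec ∘ G.inc)) T) {v : V}
    (hv : v ∈ G.vertsOf T) : G.deg T v = 2 := by
  classical
  let W : Finset V := T.biUnion fun e ↦ (G.inc e).toFinset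
  have hW : (W : Set V) = G.vertsOf T := by ext; simp [W, vertsOf]
  have htwo : ∀ v ∈ W, 2 ≤ G.deg T v := fun v hv ↦ by
    have hpos : G.deg T v ≠ 0 := fun h0 ↦ deg_eq_zero_iff.1 h0 (hW ▸ hv)
    have heven := (isZeroSum_incVec_iff.1 hT.prop).2 v
    grind
  -- Handshaking gives `2 |W| ≤ ∑ deg = 2 |T| ≤ 2 |W|`.
  have hsum : ∑ v ∈ W, 2 = ∑ v ∈ W, G.deg T v := by
    refine (Finset.sum_le_sum htwo).antisymm ?_
    rw [sum_deg hW.ge, Finset.sum_const, smul_eq_mul, mul_comm]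
    exact Nat.mul_le_mul_right 2 (card_le_of_minimal_isZeroSum hT hW.ge)
  rw [← hW] at hv
  exact ((Finset.sum_eq_sum_iff_of_le htwo).1 hsum v hv).symm

theorem isCycle_iff_minimal_isZeroSum {C : Set α} :
    G.IsCycle C ↔ C ⊆ G.E ∧ ∃ T : Finset α, ↑T = C ∧ Minimal (IsZeroSum (incVec ∘ G.inc)) T := by
  constructor
  · intro hC
    obtain ⟨hCE, hfin, -⟩ := id hC
    lift C to Finset α using hfin
    exact ⟨hCE, C, rfl, hC.minimal_isZeroSum⟩
  · rintro ⟨hTE, T, rfl, hT⟩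
    exact ⟨hTE, T.finite_toSet, hT.prop.1, fun _ ↦ deg_eq_two_of_minimal_isZeroSum hT,
      connectedOn_of_minimal_isZeroSum hT⟩

end Veblen

section TwoCycles

variable {X : Set α}

lemma exists_isCycle_subset_of_isZeroSum {T : Finset α} (hTE : ↑T ⊆ G.E)
    (hT : IsZeroSum (incVec ∘ G.inc) T) : ∃ C, G.IsCycle C ∧ C ⊆ T := by
  obtain ⟨S, hST, hS⟩ := hT.exists_minimal_subset
  have hST' := Finset.coe_subset.2 hST
  exact ⟨S, isCycle_iff_minimal_isZeroSum.2 ⟨hST'.trans hTE, S, rfl, hS⟩, hST'⟩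

lemma HasTwoCycles.exists_isCycle_subset_sdiff_singleton (hX : G.HasTwoCycles X) (e : α) :
    ∃ C, G.IsCycle C ∧ C ⊆ X \ {e} := by
  classical
  obtain ⟨C₁, C₂, hC₁, hC₂, hne, hC₁X, hC₂X⟩ := hX
  by_cases he₁ : e ∈ C₁
  · by_cases he₂ : e ∈ C₂
    · obtain ⟨hC₁E, T₁, rfl, hT₁⟩ := isCycle_iff_minimal_isZeroSum.1 hC₁
      obtain ⟨hC₂E, T₂, rfl, hT₂⟩ := isCycle_iff_minimal_isZeroSum.1 hC₂
      have hsub : (↑(T₁ ∆ T₂) : Set α) ⊆ ↑T₁ ∪ ↑T₂ := by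
        rw [Finset.coe_symmDiff]
        exact symmDiff_subset_union
      have hsum : IsZeroSum (incVec ∘ G.inc) (T₁ ∆ T₂) :=
        hT₁.prop.symmDiff hT₂.prop fun h ↦ hne (congrArg _ h)
      obtain ⟨C, hC, hCT⟩ :=
        exists_isCycle_subset_of_isZeroSum (hsub.trans (union_subset hC₁E hC₂E)) hsum
      have heC : e ∉ C := fun he ↦ (Finset.mem_symmDiff.1 (hCT he)).elim (·.2 he₂) (·.2 he₁)
      exact ⟨C, hC, subset_sdiff_singleton (hCT.trans (hsub.trans (union_subset hC₁X hC₂X))) heC⟩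
    · exact ⟨C₂, hC₂, subset_sdiff_singleton hC₂X he₂⟩
  · exact ⟨C₁, hC₁, subset_sdiff_singleton hC₁X he₁⟩

end TwoCycles

section Triangle

variable {a b c : α}

lemma IsCycle.not_isDiag {C : Set α} (hC : G.IsCycle C) (hnt : C.Nontrivial) {e : α} (he : e ∈ C) :
    ¬ (G.inc e).IsDiag := fun hdiag ↦ by
  obtain ⟨-, T, rfl, hT⟩ := isCycle_iff_minimal_isZeroSum.1 hC
  have hzero : IsZeroSum (incVec ∘ G.inc) {e} :=
    ⟨Finset.singleton_nonempty e, (Finset.sum_singleton _ _).trans (incVec_of_isDiag hdiag)⟩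
  rw [← hT.eq_of_le hzero (Finset.singleton_subset_iff.2 he), Finset.coe_singleton] at hnt
  exact not_nontrivial_singleton hnt

lemma IsCycle.toFinset_inc_eq_symmDiff [DecidableEq V] (h : G.IsCycle {a, b, c}) (hab : a ≠ b)
    (hac : a ≠ c) (hbc : b ≠ c) :
    (G.inc c).toFinset = (G.inc a).toFinset ∆ (G.inc b).toFinset := by
  classical
  have hnt : ({a, b, c} : Set α).Nontrivial := ⟨a, by simp, b, by simp, hab⟩
  have ha := incVec_of_not_isDiag (h.not_isDiag hnt (e := a) (by simp))
  have hb := incVec_of_not_isDiag (h.not_isDiag hnt (e := b) (by simp))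
  have hc := incVec_of_not_isDiag (h.not_isDiag hnt (e := c) (by simp))
  obtain ⟨-, T, hTabc, hT⟩ := isCycle_iff_minimal_isZeroSum.1 h
  obtain rfl : T = {a, b, c} := Finset.coe_injective (hTabc.trans (by simp))
  have hsum := hT.prop.2
  rw [Finset.sum_insert (by simp [hab, hac]), Finset.sum_pair hbc] at hsum
  ext v
  have hv : incVec (G.inc a) v + (incVec (G.inc b) v + incVec (G.inc c) v) = 0 := congrFun hsum v
  rw [ha, hb, hc] at hv
  rw [Finset.mem_symmDiff, Sym2.mem_toFinset, Sym2.mem_toFinset, Sym2.mem_toFinset]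
  grind

lemma IsCycle.card_toFinset_inc_inter [DecidableEq V] (h : G.IsCycle {a, b, c}) (hab : a ≠ b)
    (hac : a ≠ c) (hbc : b ≠ c) : ((G.inc a).toFinset ∩ (G.inc b).toFinset).card = 1 := by
  have hnt : ({a, b, c} : Set α).Nontrivial := ⟨a, by simp, b, by simp, hab⟩
  have ha := Sym2.card_toFinset_of_not_isDiag _ (h.not_isDiag hnt (e := a) (by simp))
  have hb := Sym2.card_toFinset_of_not_isDiag _ (h.not_isDiag hnt (e := b) (by simp))
  have hc := Sym2.card_toFinset_of_not_isDiag _ (h.not_isDiag hnt (e := c) (by simp))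
  have hsymm := card_symmDiff_add (G.inc a).toFinset (G.inc b).toFinset
  rw [← h.toFinset_inc_eq_symmDiff hab hac hbc] at hsymm
  omega

end Triangle

end Graph

/-! ### Matroids with three-point lines through any two elements -/

section Obstruction

variable {V α : Type u} {G : Graph V α} {N : Matroid α}

lemma IsLiftRep.dep_iff_hasTwoCycles (h : IsLiftRep G N) {X : Set α} (hX : X ⊆ N.E) :
    N.Dep X ↔ G.HasTwoCycles X := by
  constructor
  · intro hdep
    obtain ⟨C, hCX, hC⟩ := hdep.exists_isCircuit_subset
    obtain ⟨C₁, C₂, hC₁, hC₂, hne, hC₁C, hC₂C⟩ := ((h.2 C).1 hC).prop.2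
    exact ⟨C₁, C₂, hC₁, hC₂, hne, hC₁C.trans hCX, hC₂C.trans hCX⟩
  · rintro ⟨C₁, C₂, hC₁, hC₂, hne, hC₁X, hC₂X⟩
    obtain ⟨hC₁E, hC₁fin, -⟩ := id hC₁
    obtain ⟨hC₂E, hC₂fin, -⟩ := id hC₂
    obtain ⟨C, hC, hCmin⟩ := (hC₁fin.union hC₂fin).finite_subsets.inter_of_left
      {Y | Y ⊆ G.E ∧ G.HasTwoCycles Y} |>.exists_le_minimal
      ⟨Subset.rfl, union_subset hC₁E hC₂E, C₁, C₂, hC₁, hC₂, hne, subset_union_left,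
        subset_union_right⟩
    have hlift : G.LiftCircuit C :=
      ⟨hCmin.prop.2, fun Y hY hYC ↦ hCmin.2 ⟨hYC.trans hC, hY⟩ hYC⟩
    exact ((h.2 C).2 hlift).prop.superset (hC.trans (union_subset hC₁X hC₂X)) hX

/-- Any two distinct elements of the matroid `N` lie on a common three-point line: every pair of
distinct elements extends to a circuit of size three. -/
def PairwiseCollinear (N : Matroid α) : Prop :=
  N.E.Pairwise fun a b ↦ ∃ c, c ≠ a ∧ c ≠ b ∧ Circuit N {a, b, c}

lemma PairwiseCollinear.not_isBicircularLift (hN : PairwiseCollinear N) {a b c : α}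
    (hI : N.Indep {a, b, c}) (hab : a ≠ b) (hac : a ≠ c) (hbc : b ≠ c) :
    ¬ IsBicircularLift N := by
  rintro ⟨V, G, hG⟩
  have hE := hI.subset_ground
  have hpair {x y : α} (hxy : x ≠ y) (hx : x ∈ N.E) (hy : y ∈ N.E) :
      ∃ C, G.IsCycle C ∧ C ⊆ {x, y} := by
    obtain ⟨z, -, -, hz⟩ := hN hx hy hxy
    obtain ⟨C, hC, hCz⟩ := ((hG.dep_iff_hasTwoCycles hz.prop.subset_ground).1
      hz.prop).exists_isCycle_subset_sdiff_singleton z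
    exact ⟨C, hC, by grind⟩
  obtain ⟨C₁, hC₁, h₁⟩ := hpair hab (hE (by simp)) (hE (by simp))
  obtain ⟨C₂, hC₂, h₂⟩ := hpair hac (hE (by simp)) (hE (by simp))
  obtain ⟨C₃, hC₃, h₃⟩ := hpair hbc (hE (by simp)) (hE (by simp))
  have hone {C D : Set α} (hC : G.IsCycle C) (hD : G.IsCycle D) (hCabc : C ⊆ {a, b, c})
      (hDabc : D ⊆ {a, b, c}) : C = D := by
    by_contra hCD
    exact ((hG.dep_iff_hasTwoCycles hE).2 ⟨C, D, hC, hD, hCD, hCabc, hDabc⟩).not_indep hI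
  have h₁₂ : C₁ = C₂ := hone hC₁ hC₂ (by grind) (by grind)
  have h₁₃ : C₁ = C₃ := hone hC₁ hC₃ (by grind) (by grind)
  obtain ⟨x, hx⟩ := hC₁.2.2.1
  grind

lemma PairwiseCollinear.not_isGraphic (hN : PairwiseCollinear N) {a b c : α}
    (hI : N.Indep {a, b, c}) (hab : a ≠ b) (hac : a ≠ c) (hbc : b ≠ c) : ¬ IsGraphic N := by
  classical
  rintro ⟨V, G, hG⟩
  have ha : a ∈ N.E := hI.subset_ground (by simp)
  have hb : b ∈ N.E := hI.subset_ground (by simp)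
  have hc : c ∈ N.E := hI.subset_ground (by simp)
  let ends (e : α) : Finset V := (G.inc e).toFinset
  have hmeet {x y : α} (hx : x ∈ N.E) (hy : y ∈ N.E) (hxy : x ≠ y) :
      (ends x ∩ ends y).card = 1 := by
    obtain ⟨z, hzx, hzy, hz⟩ := hN hx hy hxy
    exact ((hG.2 _).1 hz).card_toFinset_inc_inter hxy hzx.symm hzy.symm
  obtain ⟨d, hda, hdb, hd⟩ := hN ha hb hab
  have hdE : d ∈ N.E := hd.prop.subset_ground (by simp)
  have hdc : d ≠ c := by rintro rfl; exact hd.prop.not_indep hI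
  have hends : ends d = ends a ∆ ends b :=
    ((hG.2 _).1 hd).toFinset_inc_eq_symmDiff hab hda.symm hdb.symm
  have hdist : ends d ∩ ends c = (ends a ∩ ends c) ∆ (ends b ∩ ends c) := by
    rw [hends]
    exact inf_symmDiff_distrib_right _ _ _
  have hcard := card_symmDiff_add (ends a ∩ ends c) (ends b ∩ ends c)
  rw [← hdist, hmeet hdE hc hdc, hmeet ha hc hac, hmeet hb hc hbc] at hcard
  omega

lemma PairwiseCollinear.not_inBL (hN : PairwiseCollinear N) {I : Set α} (hI : N.Indep I)
    (hcard : I.encard = 3) : ¬ InBL N := by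
  obtain ⟨a, b, c, hab, hac, hbc, rfl⟩ := encard_eq_three.1 hcard
  exact not_or.2
    ⟨hN.not_isGraphic hI hab hac hbc, hN.not_isBicircularLift hI hab hac hbc⟩

end Obstruction

lemma Represents.pairwiseCollinear {α W : Type*} [AddCommGroup W] [Module (ZMod 2) W]
    {N : Matroid α} {v : α → W} (hN : Represents (ZMod 2) v N)
    (hv : BijOn v N.E {w | w ≠ 0}) : PairwiseCollinear N := by
  classical
  intro a ha b hb hab
  have hne : ∀ e ∈ N.E, v e ≠ 0 := hv.mapsTo
  have hvab : v a ≠ v b := fun h ↦ hab (hv.injOn ha hb h)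
  obtain ⟨c, hc, hvc⟩ : v a + v b ∈ v '' N.E := hv.surjOn fun h ↦
    hvab (by rwa [← sub_eq_zero, ZModModule.sub_eq_add])
  have hca : c ≠ a := by rintro rfl; exact hne b hb (by simpa using hvc)
  have hcb : c ≠ b := by rintro rfl; exact hne a ha (by simpa using hvc)
  have hE : (({a, b, c} : Finset α) : Set α) ⊆ N.E := by
    simp [insert_subset_iff, ha, hb, hc]
  have hzero : IsZeroSum v {a, b, c} := by
    refine ⟨Finset.insert_nonempty _ _, ?_⟩
    rw [Finset.sum_insert (by grind), Finset.sum_pair hcb.symm, ← add_assoc, hvc,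
      ZModModule.add_self]
  refine ⟨c, hca, hcb, hN.circuit_iff_minimal_isZeroSum.2
    ⟨by simpa using hE, {a, b, c}, by simp, hzero, fun S hS hSabc ↦ ?_⟩⟩
  have hSE : ↑S ⊆ N.E := (Finset.coe_subset.2 hSabc).trans hE
  have hScard := hS.three_le_card (hv.injOn.mono hSE) fun e he ↦ hne e (hSE he)
  exact (Finset.eq_of_subset_of_card_le hSabc (Finset.card_le_three.trans hScard)).ge

/-! ### Embedding into `K₄` -/

lemma exists_linearEquiv_apply_eq {K V W : Type*} [Field K] [AddCommGroup V] [Module K V]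
    [AddCommGroup W] [Module K W] [FiniteDimensional K V] [FiniteDimensional K W]
    (h : Module.finrank K V = Module.finrank K W) {p : V} {q : W} (hp : p ≠ 0) (hq : q ≠ 0) :
    ∃ φ : V ≃ₗ[K] W, φ p = q := by
  let ψ : W ≃ₗ[K] V := LinearEquiv.ofFinrankEq W V h.symm
  have hψ : ψ q ≠ 0 := ψ.map_ne_zero_iff.2 hq
  obtain ⟨g, hg⟩ := Submodule.exists_linearEquiv_restrict_eq
    ((LinearEquiv.toSpanNonzeroSingleton K V p hp).symm ≪≫ₗ
      LinearEquiv.toSpanNonzeroSingleton K V (ψ q) hψ)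
  refine ⟨g.trans ψ.symm, ?_⟩
  have hgp := hg ⟨p, Submodule.mem_span_singleton_self p⟩
  rw [LinearEquiv.trans_apply, LinearEquiv.symm_apply_eq, ← hgp, LinearEquiv.trans_apply,
    ← LinearEquiv.toSpanNonzeroSingleton_one K V p hp, LinearEquiv.symm_apply_apply,
    LinearEquiv.toSpanNonzeroSingleton_one]

section GraphicMinor

variable {α : Type u} {N : Matroid α}

lemma Represents.isGraphicRep {V : Type u} {G : Graph V α}
    (hN : Represents (ZMod 2) (incVec ∘ G.inc) N) (hE : N.E = G.E) : IsGraphicRep G N :=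
  ⟨hE, fun C ↦ by
    rw [hN.circuit_iff_minimal_isZeroSum, G.isCycle_iff_minimal_isZeroSum, hE]⟩

lemma Represents.isGraphic_of_forall_exists_incVec_eq {V : Type u} [Nonempty V]
    {w : α → V → ZMod 2} (hN : Represents (ZMod 2) w N)
    (hw : ∀ e ∈ N.E, ∃ z : Sym2 V, incVec z = w e) : IsGraphic N := by
  have : Nonempty (Sym2 V) := .map Sym2.diag inferInstance
  choose! inc hinc using hw
  let G : Graph V α := ⟨N.E, inc⟩
  have hG : Represents (ZMod 2) (incVec ∘ G.inc) N := hN.congr fun e he ↦ (hinc e he).symm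
  exact ⟨V, G, hG.isGraphicRep rfl⟩

/-- The subspace of `GF(2)^V` of vectors whose coordinates sum to zero, that is, of the indicator
functions of the subsets of `V` of even size. For `|V| = 4` it is a copy of `GF(2)³` whose nonzero
vectors are the incidence vectors of the edges of `K₄` together with the all-ones vector. -/
def evenWeight (V : Type*) [Fintype V] : Submodule (ZMod 2) (V → ZMod 2) :=
  LinearMap.ker (∑ v, LinearMap.proj v)

lemma mem_evenWeight {V : Type*} [Fintype V] {x : V → ZMod 2} :
    x ∈ evenWeight V ↔ ∑ v, x v = 0 := by
  rw [evenWeight, LinearMap.mem_ker, LinearMap.sum_apply]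
  rfl

lemma finrank_evenWeight_add_one (V : Type*) [Fintype V] [Nonempty V] :
    Module.finrank (ZMod 2) (evenWeight V) + 1 = Fintype.card V := by
  classical
  have hne : (∑ v, LinearMap.proj v : Module.Dual (ZMod 2) (V → ZMod 2)) ≠ 0 := fun h ↦ by
    obtain ⟨v⟩ := ‹Nonempty V›
    simpa [LinearMap.sum_apply] using LinearMap.congr_fun h (Pi.single v 1)
  exact (Module.Dual.finrank_ker_add_one_of_ne_zero hne).trans
    (Module.finrank_fintype_fun_eq_card _)

lemma exists_incVec_eq_of_mem_evenWeight {V : Type*} [Fintype V] (hV : Fintype.card V = 4)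
    {x : V → ZMod 2} (hx : x ∈ evenWeight V) (hx1 : x ≠ 1) : ∃ z : Sym2 V, incVec z = x := by
  classical
  let S : Finset V := {v | x v ≠ 0}
  have hval (v : V) : x v = if v ∈ S then 1 else 0 := by
    by_cases hv : x v = 0
    · simp [S, hv]
    · rw [if_pos (by simpa [S] using hv)]
      exact Fin.eq_one_of_ne_zero _ hv
  have heven : Even S.card := by
    rw [← ZMod.natCast_eq_zero_iff_even, ← mem_evenWeight.1 hx,
      Finset.sum_congr rfl fun v _ ↦ hval v]
    simp
  have hlt : S.card < 4 := by
    obtain ⟨v, hv⟩ := Function.ne_iff.1 hx1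
    exact hV ▸ Finset.card_lt_univ_of_notMem fun hvS ↦ hv ((hval v).trans (if_pos hvS))
  obtain h0 | h2 : S.card = 0 ∨ S.card = 2 := by grind
  · obtain ⟨v⟩ : Nonempty V := Fintype.card_pos_iff.1 (by omega)
    refine ⟨Sym2.diag v, funext fun v ↦ ?_⟩
    rw [incVec_of_isDiag (Sym2.diag_isDiag _), hval, Finset.card_eq_zero.1 h0]
    simp
  · obtain ⟨a, b, hab, hS⟩ := Finset.card_eq_two.1 h2
    refine ⟨s(a, b), funext fun v ↦ ?_⟩
    rw [incVec_of_not_isDiag (Sym2.mk_isDiag_iff.not.2 hab), hval, hS]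
    simp

lemma Represents.isGraphic_of_finrank_eq_three {W : Type*} [AddCommGroup W] [Module (ZMod 2) W]
    {w : α → W} (hN : Represents (ZMod 2) w N) (hW : Module.finrank (ZMod 2) W = 3) {p : W}
    (hp : p ≠ 0) (hpN : p ∉ w '' N.E) : IsGraphic N := by
  have hfin : FiniteDimensional (ZMod 2) W := .of_finrank_eq_succ hW
  obtain ⟨V, _, hV⟩ : ∃ (V : Type u) (_ : Fintype V), Fintype.card V = 4 :=
    ⟨ULift (Fin 4), inferInstance, by simp⟩
  have : Nonempty V := Fintype.card_pos_iff.1 (by omega)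
  have hone : (1 : V → ZMod 2) ∈ evenWeight V := by
    simp only [mem_evenWeight, Pi.one_apply, Finset.sum_const, Finset.card_univ, hV]
    decide
  have hrank := finrank_evenWeight_add_one V
  obtain ⟨φ, hφ⟩ : ∃ φ : W ≃ₗ[ZMod 2] evenWeight V, φ p = ⟨1, hone⟩ :=
    exists_linearEquiv_apply_eq (by omega) hp fun h ↦ one_ne_zero (congrArg Subtype.val h)
  have hφN : Represents (ZMod 2) (fun e ↦ (φ (w e) : V → ZMod 2)) N :=
    hN.comp_injective (f := (evenWeight V).subtype ∘ₗ φ.toLinearMap)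
      ((evenWeight V).subtype_injective.comp φ.injective)
  refine hφN.isGraphic_of_forall_exists_incVec_eq fun e he ↦
    exists_incVec_eq_of_mem_evenWeight hV (φ (w e)).2 fun h ↦ ?_
  exact hpN ⟨e, he, φ.injective (hφ ▸ Subtype.ext h)⟩

end GraphicMinor

theorem statement_4 {α : Type u} (N : Matroid α) (h : IsFano N) :
    ExcludedMinorBL N ∧ ¬ IsBicircularLift N := by
  obtain ⟨v, hv, hindep⟩ := h
  have hN : Represents (ZMod 2) v N := hindep
  have hrank : Module.finrank (ZMod 2) (Fin 3 → ZMod 2) = 3 := Module.finrank_fin_fun _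
  have hspan : Submodule.span (ZMod 2) (v '' N.E) = ⊤ := by
    rw [hv.image_eq, ← compl_singleton_eq, compl_eq_univ_sdiff, Submodule.span_sdiff_singleton_zero,
      Submodule.span_univ]
  obtain ⟨B, hB⟩ := N.exists_isBase
  have hcard : B.encard = 3 := by rw [hN.encard_eq_finrank_of_isBase hspan hB, hrank]; rfl
  have hBL : ¬ InBL N := (hN.pairwiseCollinear hv).not_inBL hB.indep hcard
  refine ⟨⟨hBL, fun M hM ↦ .inl ?_⟩, fun hlift ↦ hBL (.inr hlift)⟩
  obtain ⟨w, hw, p, hp, hpM⟩ := hM.exists_represents hN hv.injOn hv.mapsTo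
  exact hw.isGraphic_of_finrank_eq_three hrank hp hpM

end BLFormal
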